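/- arXiv:2512.24292 — 3 statements merged into one kernel-verified Lean document; each statement's English description precedes it below -/
import Mathlib

section
/- No linear [6, 3, 4]_5 code is uniformly packed in the wide sense, but there exists a self-dual linear [6, 3, 4]_5 code. -/
/-!
Let `C` be a linear `[6,3,4]` code over a field `F` with five elements.

*Covering radius at most 2.* Since `C` is MDS, it has codewords `gᵢ = (eᵢ, aᵢ)`, `i = 0, 1, 2`.
If some vector had distance at least `3` from `C`, one could take it of the form `(0, y)`.  The
weight conditions then force all entries and all `2 × 2` minors of the `4 × 3` matrix with rows
`a₀, a₁, a₂, y` to be nonzero, so for two distinct columns `k, l` the four ratios of their entries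
run through all of `Fˣ`, whose product is `-1` (Wilson).  Hence the products `Pₖ` of the entries
of the columns satisfy `Pₗ = -Pₖ` for all `k ≠ l`, which is impossible for three columns
since `P₀ ≠ 0` and `2 ≠ 0` in `F` (`exists_dist_le_two`).

*Not uniformly packed.* With `ρ ≤ 2`, evaluating the packing condition at `0` and at a vector of
weight one gives `β₀ = β₁ = 1`.  Summing `B₀ + B₁ + β₂ B₂ = 1` over all `5⁶` vectors, where
`∑ₓ B_{x,t} = |C| * (6 choose t) * 4 ^ t`, gives `β₂ = 5/12`; so a vector at distance `2` would
have `B₂ = 12/5`, and all vectors would be at distance at most `1`, contradicting the same count.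

*Existence.* The code with generator matrix `[I | A]`, where `A` is the symmetric matrix with rows
`(1,2,2), (2,1,-2), (2,-2,1)`, satisfies `A * A = -I` modulo `5`.
-/

open Finset

/-- The distance `d(v, C)` from a vector `v` to a code `C`. -/
noncomputable def distTo {n : ℕ} {F : Type*} [DecidableEq F] (C : Set (Fin n → F))
    (v : Fin n → F) : ℕ :=
  sInf (hammingDist v '' C)

/-- `numAt C v t` is the number `B_{v,t}` of codewords of `C` at Hamming
distance `t` from `v`. -/
noncomputable def numAt {n : ℕ} {F : Type*} [DecidableEq F] (C : Set (Fin n → F))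
    (v : Fin n → F) (t : ℕ) : ℕ :=
  Set.ncard {c ∈ C | hammingDist v c = t}

/-- A code is completely regular if `B_{v,t}` depends only on `t` and `d(v,C)`. -/
def CompletelyRegular {n : ℕ} {F : Type*} [DecidableEq F]
    (C : Set (Fin n → F)) : Prop :=
  ∀ u v : Fin n → F, distTo C u = distTo C v → ∀ t, numAt C u t = numAt C v t

/-- The covering radius `ρ` of a code. -/
noncomputable def coveringRadius {n : ℕ} {F : Type*} [DecidableEq F]
    (C : Set (Fin n → F)) : ℕ :=
  sSup (Set.range (distTo C))

/-- `C` is uniformly packed in the wide sense: there are rational packing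
coefficients `β_0, …, β_ρ` with `∑ i, β i * B_{x,i} = 1` for every `x`. -/
def UPWS {n : ℕ} {F : Type*} [DecidableEq F] (C : Set (Fin n → F)) : Prop :=
  ∃ β : ℕ → ℚ, ∀ x : Fin n → F,
    ∑ i ∈ Finset.range (coveringRadius C + 1), β i * (numAt C x i : ℚ) = 1

/-- `C` is a linear `[n, k, d]` code: a `k`-dimensional subspace of `F^n` such
that `d` is the least Hamming weight of a nonzero codeword. -/
def IsLinearCode {n : ℕ} {F : Type*} [Field F] [DecidableEq F]
    (C : Submodule F (Fin n → F)) (k d : ℕ) : Prop :=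
  Module.finrank F C = k ∧
  IsLeast {w : ℕ | ∃ c ∈ C, c ≠ 0 ∧ hammingNorm c = w} d

/-- `C` is self-dual: it coincides with its Euclidean dual code. -/
def SelfDual {n : ℕ} {F : Type*} [Field F]
    (C : Submodule F (Fin n → F)) : Prop :=
  (C : Set (Fin n → F)) = {x | ∀ v ∈ C, ∑ i, x i * v i = 0}

/-! ### Weights and information sets -/

section Weights

variable {F : Type*} [Field F] [DecidableEq F]

/-- A bound for the weight of a word of length `6` from bounds on the supports of its two
halves. -/
lemma norm_le_of_halves (w : Fin 6 → F) (A B : Finset (Fin 3))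
    (hA : ∀ a, a ∉ A → w (Fin.castAdd 3 a) = 0)
    (hB : ∀ a, a ∉ B → w (Fin.natAdd 3 a) = 0) :
    hammingNorm w ≤ #A + #B := by
  have hsub : (univ.filter fun i => w i ≠ 0) ⊆
      A.image (Fin.castAdd 3) ∪ B.image (Fin.natAdd 3) := by
    intro i hi
    have hi' : w i ≠ 0 := by simpa using hi
    rw [Finset.mem_union, Finset.mem_image, Finset.mem_image]
    revert hi'
    refine Fin.addCases (m := 3) (n := 3) (fun a ha => ?_) (fun a ha => ?_) i
    · exact Or.inl ⟨a, by_contra fun h => ha (hA a h), rfl⟩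
    · exact Or.inr ⟨a, by_contra fun h => ha (hB a h), rfl⟩
  calc hammingNorm w = #(univ.filter fun i => w i ≠ 0) := rfl
    _ ≤ _ := Finset.card_le_card hsub
    _ ≤ _ := Finset.card_union_le _ _
    _ ≤ _ := Nat.add_le_add Finset.card_image_le Finset.card_image_le

lemma card_pair_compl : ∀ k l : Fin 3, k ≠ l → #(({k, l} : Finset (Fin 3))ᶜ) = 1 := by decide

lemma card_singleton_compl : ∀ k : Fin 3, #(({k} : Finset (Fin 3))ᶜ) = 2 := by decide

lemma eq_zero_of_norm_le {C : Submodule F (Fin 6 → F)} (hC : IsLinearCode C 3 4)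
    {c : Fin 6 → F} (hc : c ∈ C) (h : hammingNorm c ≤ 3) : c = 0 := by
  by_contra h0
  have := hC.2.2 ⟨c, hc, h0, rfl⟩
  omega

/-- An MDS code is systematic: the first three coordinates form an information set. -/
lemma exists_systematic {C : Submodule F (Fin 6 → F)} (hC : IsLinearCode C 3 4)
    (u : Fin 3 → F) : ∃ c ∈ C, ∀ a, c (Fin.castAdd 3 a) = u a := by
  let f : C →ₗ[F] (Fin 3 → F) :=
    (LinearMap.funLeft F F (Fin.castAdd 3 : Fin 3 → Fin 6)).comp C.subtype
  have hinj : Function.Injective f := by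
    rw [injective_iff_map_eq_zero]
    intro c hc
    apply Subtype.ext
    refine eq_zero_of_norm_le hC c.2 ?_
    refine (norm_le_of_halves c.1 ∅ univ (fun a _ => congrFun hc a) (by simp)).trans ?_
    simp
  have hsurj : Function.Surjective f :=
    (LinearMap.injective_iff_surjective_of_finrank_eq_finrank (by simp [hC.1])).1 hinj
  obtain ⟨c, hc⟩ := hsurj u
  exact ⟨c.1, c.2, fun a => congrFun hc a⟩

/-! ### The covering radius -/

/-- If the ratios `q i / p i` of two families of `|Fˣ|` nonzero elements are pairwise distinct,
they run through all of `Fˣ`, so by Wilson's theorem the two products differ by a sign. -/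
lemma prod_eq_neg_prod [Fintype F] {ι : Type*} [Fintype ι]
    (hι : Fintype.card ι = Fintype.card Fˣ) (p q : ι → F) (hp : ∀ i, p i ≠ 0) (hq : ∀ i, q i ≠ 0)
    (h : ∀ i j, q i * p j = q j * p i → i = j) : ∏ i, q i = -∏ i, p i := by
  let r : ι → Fˣ := fun i => Units.mk0 (q i) (hq i) / Units.mk0 (p i) (hp i)
  have hr : ∀ i, ((r i : Fˣ) : F) = q i / p i := fun i => by simp [r]
  have hinj : Function.Injective r := by
    intro i j hij
    apply h
    have := congrArg (fun z : Fˣ => (z : F)) hij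
    simp only [hr] at this
    rwa [div_eq_div_iff (hp i) (hp j)] at this
  have hbij : Function.Bijective r := (Fintype.bijective_iff_injective_and_card r).2 ⟨hinj, hι⟩
  have h1 : ∏ i, r i = ∏ u : Fˣ, u := hbij.prod_comp (fun u => u)
  rw [FiniteField.prod_univ_units_id_eq_neg_one] at h1
  have h2 := congrArg (fun z : Fˣ => (z : F)) h1
  simp only [Units.coe_prod, hr, Finset.prod_div_distrib, Units.val_neg, Units.val_one] at h2
  rw [div_eq_iff (Finset.prod_ne_zero_iff.2 fun i _ => hp i)] at h2
  rw [h2, neg_one_mul]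

/-- The covering radius of a `[6,3,4]` code over `F` with `|F| = 5` is at most `2`. -/
lemma exists_dist_le_two [Fintype F] (hF : Fintype.card F = 5)
    {C : Submodule F (Fin 6 → F)} (hC : IsLinearCode C 3 4) (x : Fin 6 → F) :
    ∃ c ∈ C, hammingDist x c ≤ 2 := by
  by_contra! hx
  obtain ⟨c₀, hc₀, hxc⟩ := exists_systematic hC (fun a => x (Fin.castAdd 3 a))
  choose g hgC hg using fun i : Fin 3 => exists_systematic hC (Pi.single i (1 : F))
  -- `y = x - c₀` vanishes on the first half and is still at distance at least `3` from `C`.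
  set y := x - c₀ with hy
  have hytop : ∀ a : Fin 3, y (Fin.castAdd 3 a) = 0 := fun a => by simp [hy, hxc]
  have hyC : ∀ c ∈ C, 2 < hammingNorm (y - c) := by
    intro c hc
    have := hx (c₀ + c) (C.add_mem hc₀ hc)
    rwa [hammingDist_comm, hammingDist_eq_hammingNorm, neg_add_eq_sub, ← sub_sub, ← hy] at this
  let R : Option (Fin 3) → Fin 3 → F := fun o k =>
    o.elim (y (Fin.natAdd 3 k)) (fun i => g i (Fin.natAdd 3 k))
  have hR : ∀ o k, R o k ≠ 0 := by
    rintro (_ | i) k h0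
    · have h1 := hyC 0 C.zero_mem
      have h2 := norm_le_of_halves y ∅ {k}ᶜ (fun a _ => hytop a) (by
        intro a ha
        obtain rfl : a = k := by simpa using ha
        exact h0)
      rw [card_singleton_compl, Finset.card_empty] at h2
      rw [sub_zero] at h1
      omega
    · have h2 := norm_le_of_halves (g i) {i} {k}ᶜ (fun a ha => by
        rw [hg, Pi.single_eq_of_ne (by simpa using ha)]) (by
        intro a ha
        obtain rfl : a = k := by simpa using ha
        exact h0)
      rw [card_singleton_compl, Finset.card_singleton] at h2
      have h3 := congrFun (eq_zero_of_norm_le hC (hgC i) h2) (Fin.castAdd 3 i)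
      rw [hg] at h3
      simp at h3
  -- A vanishing minor of `y` and `g j` yields a codeword at distance at most `2` from `y`.
  have hy_minor : ∀ j k l, k ≠ l →
      R none l * R (some j) k ≠ R (some j) l * R none k := by
    intro j k l hkl h
    have hgk := hR (some j) k
    have h1 := hyC ((R none k / R (some j) k) • g j) (C.smul_mem _ (hgC j))
    have h2 := norm_le_of_halves (y - (R none k / R (some j) k) • g j) {j} {k, l}ᶜ
      (fun a ha => by
        simp [hytop, hg, Pi.single_eq_of_ne (show a ≠ j by simpa using ha)]) (by
      intro a ha
      have ha' : a = k ∨ a = l := by simpa [or_iff_not_imp_left] using ha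
      change R none a - (R none k / R (some j) k) * R (some j) a = 0
      rcases ha' with rfl | rfl
      · field_simp
        ring
      · field_simp
        linear_combination h)
    rw [card_pair_compl k l hkl, Finset.card_singleton] at h2
    omega
  -- A vanishing minor of `g i` and `g j` yields a nonzero codeword of weight at most `3`.
  have hg_minor : ∀ i j k l, k ≠ l →
      R (some i) l * R (some j) k = R (some j) l * R (some i) k → i = j := by
    intro i j k l hkl h
    by_contra hij
    have h2 := norm_le_of_halves (R (some j) k • g i - R (some i) k • g j) {i, j} {k, l}ᶜ
      (fun a ha => by
        have ha' : a ≠ i ∧ a ≠ j := by simpa using ha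
        simp [hg, Pi.single_eq_of_ne ha'.1, Pi.single_eq_of_ne ha'.2]) (by
      intro a ha
      have ha' : a = k ∨ a = l := by simpa [or_iff_not_imp_left] using ha
      change R (some j) k * R (some i) a - R (some i) k * R (some j) a = 0
      rcases ha' with rfl | rfl
      · ring
      · linear_combination h)
    rw [card_pair_compl k l hkl, Finset.card_pair hij] at h2
    have h3 := congrFun (eq_zero_of_norm_le hC
      (C.sub_mem (C.smul_mem _ (hgC i)) (C.smul_mem _ (hgC j))) h2) (Fin.castAdd 3 i)
    simp only [Pi.sub_apply, Pi.smul_apply, hg, Pi.single_eq_same, smul_eq_mul, Pi.zero_apply,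
      Pi.single_eq_of_ne hij] at h3
    exact hR (some j) k (by simpa using h3)
  have hcol : ∀ k l, k ≠ l → ∏ o, R o l = -∏ o, R o k := by
    intro k l hkl
    refine prod_eq_neg_prod ?_ (fun o => R o k) (fun o => R o l) (fun o => hR o k)
      (fun o => hR o l) ?_
    · rw [Fintype.card_units, hF]
      simp
    · rintro (_ | i) (_ | j) h
      · rfl
      · exact absurd h (hy_minor j k l hkl)
      · exact absurd h.symm (hy_minor i k l hkl)
      · rw [hg_minor i j k l hkl h]
  have hP : ∏ o, R o 0 ≠ 0 := Finset.prod_ne_zero_iff.2 fun o _ => hR o 0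
  have h01 := hcol 0 1 (by decide)
  have h12 := hcol 1 2 (by decide)
  have h02 := hcol 0 2 (by decide)
  have h5 : (5 : F) = 0 := by
    have := Nat.cast_card_eq_zero F
    rw [hF] at this
    exact_mod_cast this
  exact hP (by linear_combination 2 * h12 - 2 * h02 - 2 * h01 + (∏ o, R o 0) * h5)

/-! ### Counting and the packing condition -/

/-- The number of words of length `6` and weight `t`. -/
lemma card_sphere [Fintype F] (hF : Fintype.card F = 5) (t : ℕ) :
    #(univ.filter fun x : Fin 6 → F => hammingNorm x = t) = Nat.choose 6 t * 4 ^ t := by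
  have hmaps : ∀ x ∈ univ.filter (fun x : Fin 6 → F => hammingNorm x = t),
      (univ.filter fun i => x i ≠ 0) ∈ powersetCard t (univ : Finset (Fin 6)) := by
    intro x hx
    rw [Finset.mem_powersetCard]
    exact ⟨Finset.subset_univ _, (Finset.mem_filter.1 hx).2⟩
  rw [Finset.card_eq_sum_card_fiberwise hmaps]
  have hfib : ∀ S ∈ powersetCard t (univ : Finset (Fin 6)),
      #((univ.filter fun x : Fin 6 → F => hammingNorm x = t).filter
        fun x => (univ.filter fun i => x i ≠ 0) = S) = 4 ^ t := by
    intro S hS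
    have hcard := (Finset.mem_powersetCard.1 hS).2
    have heq : ((univ.filter fun x : Fin 6 → F => hammingNorm x = t).filter
        fun x => (univ.filter fun i => x i ≠ 0) = S) =
        Fintype.piFinset fun i => if i ∈ S then ({0}ᶜ : Finset F) else {0} := by
      ext x
      simp only [Finset.mem_filter, Finset.mem_univ, true_and, Fintype.mem_piFinset]
      constructor
      · rintro ⟨-, rfl⟩ i
        by_cases hi : x i = 0 <;> simp [hi]
      · intro h
        have hsupp : (univ.filter fun i => x i ≠ 0) = S := by
          ext i
          have := h i
          by_cases hi : i ∈ S <;> simp_all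
        exact ⟨by rw [← hcard, ← hsupp]; rfl, hsupp⟩
    rw [heq, Fintype.card_piFinset]
    have : ∀ i, #(if i ∈ S then ({0}ᶜ : Finset F) else {0}) = if i ∈ S then 4 else 1 := by
      intro i
      split_ifs
      · rw [Finset.card_compl, hF]
        simp
      · simp
    simp only [this]
    rw [Finset.prod_ite_mem, Finset.univ_inter, Finset.prod_const, hcard]
  rw [Finset.sum_congr rfl hfib]
  simp

/-- Double counting of the pairs (vector, codeword) at distance `t`. -/
lemma sum_numAt [Fintype F] (hF : Fintype.card F = 5)
    {C : Submodule F (Fin 6 → F)} (hC : IsLinearCode C 3 4) (t : ℕ) :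
    ∑ x, numAt (C : Set (Fin 6 → F)) x t = 125 * (Nat.choose 6 t * 4 ^ t) := by
  classical
  have hcardC : #(univ.filter fun c : Fin 6 → F => c ∈ C) = 125 := by
    have h := Module.card_eq_pow_finrank (K := F) (V := C)
    rw [hC.1, hF] at h
    rw [← Fintype.card_subtype]
    simpa using h
  have hnum : ∀ x, numAt (C : Set (Fin 6 → F)) x t =
      ∑ c ∈ univ.filter (fun c : Fin 6 → F => c ∈ C), if hammingDist x c = t then 1 else 0 := by
    intro x
    rw [numAt, ← Finset.card_filter, ← Set.ncard_coe_finset]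
    congr 1
    ext c
    simp
  simp only [hnum]
  rw [Finset.sum_comm]
  have hsphere : ∀ c : Fin 6 → F, (∑ x, if hammingDist x c = t then 1 else 0) =
      Nat.choose 6 t * 4 ^ t := by
    intro c
    rw [← card_sphere hF t, Finset.card_filter]
    refine Fintype.sum_equiv (Equiv.subRight c) _ _ fun x => ?_
    rw [hammingDist_comm, hammingDist_eq_hammingNorm, neg_add_eq_sub, Equiv.subRight_apply]
  simp [hsphere, hcardC]

/-- The distance distribution with respect to a vector of weight at most one: the zero codeword
is the only one at distance at most `2`. -/
lemma numAt_of_norm_le_one {C : Submodule F (Fin 6 → F)} (hC : IsLinearCode C 3 4)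
    {x : Fin 6 → F} (hx : hammingNorm x ≤ 1) {t : ℕ} (ht : t ≤ 2) :
    numAt (C : Set (Fin 6 → F)) x t = if hammingNorm x = t then 1 else 0 := by
  have hzero : ∀ c ∈ C, hammingDist x c = t → c = 0 := by
    intro c hc h
    apply eq_zero_of_norm_le hC hc
    have := hammingDist_triangle 0 x c
    simp only [hammingDist_zero_left, h] at this
    omega
  rw [numAt]
  split_ifs with h
  · rw [Set.ncard_eq_one]
    refine ⟨0, Set.eq_singleton_iff_unique_mem.2 ⟨⟨C.zero_mem, by simpa using h⟩, ?_⟩⟩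
    exact fun c hc => hzero c hc.1 hc.2
  · convert Set.ncard_empty (Fin 6 → F)
    refine Set.eq_empty_of_forall_notMem fun c hc => h ?_
    have := hzero c hc.1 hc.2
    rw [← hc.2, this, hammingDist_zero_right]

lemma not_UPWS [Fintype F] (hF : Fintype.card F = 5)
    {C : Submodule F (Fin 6 → F)} (hC : IsLinearCode C 3 4) :
    ¬ UPWS (C : Set (Fin 6 → F)) := by
  rintro ⟨β, hβ⟩
  have hρ : coveringRadius (C : Set (Fin 6 → F)) ≤ 2 := by
    refine csSup_le' ?_
    rintro _ ⟨x, rfl⟩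
    obtain ⟨c, hc, h⟩ := exists_dist_le_two hF hC x
    exact (Nat.sInf_le (Set.mem_image_of_mem _ hc)).trans h
  -- Padding with zeros makes the packing condition a sum of three terms even if `ρ < 2`.
  obtain ⟨γ, hγ⟩ : ∃ γ : ℕ → ℚ, ∀ x, γ 0 * numAt (C : Set (Fin 6 → F)) x 0 +
      γ 1 * numAt (C : Set (Fin 6 → F)) x 1 + γ 2 * numAt (C : Set (Fin 6 → F)) x 2 = 1 := by
    refine ⟨fun i => if i ∈ range (coveringRadius (C : Set (Fin 6 → F)) + 1) then β i else 0,
      fun x => ?_⟩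
    have hsub : range (coveringRadius (C : Set (Fin 6 → F)) + 1) ⊆ range 3 :=
      Finset.range_mono (by omega)
    rw [← hβ x, ← Finset.inter_eq_right.2 hsub, ← Finset.sum_ite_mem]
    simp only [Finset.sum_range_succ, Finset.sum_range_zero, zero_add, ite_mul, zero_mul,
      Finset.inter_eq_right.2 hsub]
  have h0 : γ 0 = 1 := by
    have h := hγ 0
    simpa [numAt_of_norm_le_one hC (x := 0)] using h
  have h1 : γ 1 = 1 := by
    have hn : hammingNorm (Pi.single 0 1 : Fin 6 → F) = 1 := by
      simp [hammingNorm, Pi.single_apply, Finset.filter_eq']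
    have h := hγ (Pi.single 0 1)
    simpa [numAt_of_norm_le_one hC hn.le, hn] using h
  simp only [h0, h1, one_mul] at hγ
  have hs := fun t => congrArg (fun n : ℕ => (n : ℚ)) (sum_numAt hF hC t)
  simp only [Nat.cast_sum] at hs
  have hcard : Fintype.card (Fin 6 → F) = 15625 := by simp [hF]
  have h2 : γ 2 = 5 / 12 := by
    have h := Finset.sum_congr (rfl : (univ : Finset (Fin 6 → F)) = univ) fun x _ => hγ x
    rw [Finset.sum_add_distrib, Finset.sum_add_distrib, ← Finset.mul_sum, hs, hs, hs,
      Finset.sum_const, Finset.card_univ, hcard] at h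
    norm_num [Nat.choose] at h
    linarith
  have hle : ∀ x, numAt (C : Set (Fin 6 → F)) x 0 + numAt (C : Set (Fin 6 → F)) x 1 = 1 := by
    intro x
    have h := hγ x
    rw [h2] at h
    have h' : 12 * numAt (C : Set (Fin 6 → F)) x 0 + 12 * numAt (C : Set (Fin 6 → F)) x 1 +
        5 * numAt (C : Set (Fin 6 → F)) x 2 = 12 := by
      have : (12 * numAt (C : Set (Fin 6 → F)) x 0 + 12 * numAt (C : Set (Fin 6 → F)) x 1 +
        5 * numAt (C : Set (Fin 6 → F)) x 2 : ℚ) = 12 := by linarith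
      exact_mod_cast this
    omega
  have h := Finset.sum_congr (rfl : (univ : Finset (Fin 6 → F)) = univ) fun x _ => hle x
  rw [Finset.sum_add_distrib, sum_numAt hF hC, sum_numAt hF hC, Finset.sum_const,
    Finset.card_univ, hcard] at h
  norm_num [Nat.choose] at h

end Weights

/-! ### A self-dual code -/

section Example

/-- The systematic encoder with redundancy part `A`, the symmetric matrix with rows `(1,2,2)`,
`(2,1,-2)`, `(2,-2,1)`. -/
def encode (R : Type*) [CommRing R] (u : Fin 3 → R) : Fin 6 → R :=
  ![u 0, u 1, u 2, u 0 + 2 * u 1 + 2 * u 2, 2 * u 0 + u 1 - 2 * u 2, 2 * u 0 - 2 * u 1 + u 2]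

/-- `encode` as a linear map. -/
def encodeLin (F : Type*) [Field F] : (Fin 3 → F) →ₗ[F] (Fin 6 → F) where
  toFun := encode F
  map_add' u v := by
    ext i
    fin_cases i <;> simp [encode] <;> ring
  map_smul' r u := by
    ext i
    fin_cases i <;> simp [encode] <;> ring

lemma encodeLin_injective (F : Type*) [Field F] : Function.Injective (encodeLin F) := by
  intro u v h
  ext i
  fin_cases i
  · exact congrFun h 0
  · exact congrFun h 1
  · exact congrFun h 2

set_option maxRecDepth 100000 in
lemma four_le_norm_encode_zmod :
    ∀ a b c : ZMod 5, ![a, b, c] ≠ 0 → 4 ≤ hammingNorm (encode (ZMod 5) ![a, b, c]) := by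
  decide

variable {F : Type*} [Field F] [Fintype F] [DecidableEq F]

/-- The weight bound over `ZMod 5` carries over to every field with five elements. -/
lemma four_le_norm_encode (hF : Fintype.card F = 5) (u : Fin 3 → F) (hu : u ≠ 0) :
    4 ≤ hammingNorm (encode F u) := by
  have : Fact (Nat.Prime 5) := ⟨by norm_num⟩
  let e : ZMod 5 ≃+* F := ZMod.ringEquivOfPrime F (by norm_num) hF
  let v : Fin 3 → ZMod 5 := fun i => e.symm (u i)
  have hv : v = ![v 0, v 1, v 2] := by
    ext i
    fin_cases i <;> rfl
  have hv0 : v ≠ 0 := by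
    intro h
    apply hu
    ext i
    have := congrFun h i
    simpa [v] using this
  have henc : encode F u = fun i => e (encode (ZMod 5) v i) := by
    ext i
    have he2 : e 2 = 2 := map_ofNat e 2
    fin_cases i <;> simp [encode, v, he2]
  have hnorm : hammingNorm (encode F u) = hammingNorm (encode (ZMod 5) v) := by
    rw [henc]
    exact hammingNorm_comp (fun _ => e) (fun _ => e.injective) (fun _ => map_zero e)
  rw [hnorm, hv]
  exact four_le_norm_encode_zmod _ _ _ (hv ▸ hv0)

lemma exists_selfDual (hF : Fintype.card F = 5) :
    ∃ C : Submodule F (Fin 6 → F), IsLinearCode C 3 4 ∧ SelfDual C := by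
  have h5 : (5 : F) = 0 := by
    have := Nat.cast_card_eq_zero F
    rw [hF] at this
    exact_mod_cast this
  have h2 : (2 : F) ≠ 0 := by
    intro h
    exact one_ne_zero (α := F) (by linear_combination h5 - 2 * h)
  refine ⟨LinearMap.range (encodeLin F), ⟨?_, ?_, ?_⟩, ?_⟩
  · rw [LinearMap.finrank_range_of_inj (encodeLin_injective F)]
    simp
  · refine ⟨encodeLin F ![1, 0, 0], ⟨_, rfl⟩, ?_, ?_⟩
    · intro h
      have := congrFun h 0
      simp [encodeLin, encode] at this
    · have : (univ.filter fun i => encode F ![1, 0, 0] i ≠ 0) = {0, 3, 4, 5} := by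
        ext i
        fin_cases i <;> simp [encode, h2]
      change #(univ.filter fun i => encode F ![1, 0, 0] i ≠ 0) = 4
      rw [this]
      rfl
  · rintro w ⟨_, ⟨u, rfl⟩, h0, rfl⟩
    refine four_le_norm_encode hF u ?_
    rintro rfl
    exact h0 (map_zero _)
  · ext x
    constructor
    · rintro ⟨u, rfl⟩ _ ⟨v, rfl⟩
      simp only [encodeLin, LinearMap.coe_mk, AddHom.coe_mk, Fin.sum_univ_six, encode]
      simp
      linear_combination (2 * u 0 * v 0 + 2 * u 1 * v 1 + 2 * u 2 * v 2) * h5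
    · intro hx
      have e0 := hx _ ⟨![1, 0, 0], rfl⟩
      have e1 := hx _ ⟨![0, 1, 0], rfl⟩
      have e2 := hx _ ⟨![0, 0, 1], rfl⟩
      simp [encodeLin, Fin.sum_univ_six, encode] at e0 e1 e2
      refine ⟨![x 0, x 1, x 2], ?_⟩
      -- Orthogonality to the rows of `[I | A]` says `x_top = -A * x_bot`, and `A * A = -I`.
      ext i
      fin_cases i
      · rfl
      · rfl
      · rfl
      · simp [encodeLin, encode]
        linear_combination e0 + 2 * e1 + 2 * e2 - 2 * x 3 * h5
      · simp [encodeLin, encode]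
        linear_combination 2 * e0 + e1 - 2 * e2 - 2 * x 4 * h5
      · simp [encodeLin, encode]
        linear_combination 2 * e0 - 2 * e1 + e2 - 2 * x 5 * h5

end Example

/-- No linear `[6,3,4]_5` code is uniformly packed in the wide sense, but a
self-dual linear `[6,3,4]_5` code exists. -/
theorem stmt_17 {F : Type*} [Field F] [Fintype F] [DecidableEq F]
    (hF : Fintype.card F = 5) :
    (∀ C : Submodule F (Fin 6 → F), IsLinearCode C 3 4 →
        ¬ UPWS (C : Set (Fin 6 → F))) ∧
    (∃ C : Submodule F (Fin 6 → F), IsLinearCode C 3 4 ∧ SelfDual C) :=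
  ⟨fun _ hC => not_UPWS hF hC, exists_selfDual hF⟩
end

section
/- If C is a linear MDS [n,k,d]_5 code over the field with 5 elements with 2 ≤ k ≤ n−2, then the pair (n,k) belongs to {(6,4), (6,3), (6,2), (5,3), (5,2), (4,2)}. -/
/-!
An MDS code of dimension `k` and length `k + m` has a generator matrix `[I | A]` with respect to
its first `k` coordinates, and the distance condition forces every square submatrix of the
`k × m` matrix `A` to be nonsingular (`exists_superregular`): a vanishing minor yields a nonzero
codeword of weight at most `m`. This property, here called superregularity, passes to submatrices,
to the transpose, and survives rescaling rows and columns.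

Over `F_5` it bounds the size of `A`. In a superregular matrix with two rows, the ratios of the
two entries in each column are distinct and nonzero, so there are at most four columns
(`Superregular.le_four`). There is no `3 × 4` superregular matrix
(`Superregular.not_three_by_four`): after rescaling, the first row and column consist of ones, the
remaining entries of each of the other rows are a permutation of `2, 3, 4`, the two permutations
differ in every position, and in both resulting cases some `3 × 3` minor vanishes. Applying both
bounds to `A` and its transpose leaves exactly the six listed parameter pairs.
-/

open Finset

/-- Every square submatrix of `A`, of any size, is nonsingular. Row and column selections are
injections rather than subsets, which changes each minor at most by a sign. -/
def Superregular {F : Type*} [CommRing F] {k m : ℕ} (A : Matrix (Fin k) (Fin m) F) : Prop :=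
  ∀ (t : ℕ) (f : Fin t → Fin k) (g : Fin t → Fin m), Function.Injective f →
    Function.Injective g → (A.submatrix f g).det ≠ 0

namespace Superregular

lemma transpose {F : Type*} [CommRing F] {k m : ℕ} {A : Matrix (Fin k) (Fin m) F}
    (h : Superregular A) : Superregular A.transpose := by
  intro t f g hf hg
  rw [← Matrix.transpose_submatrix, Matrix.det_transpose]
  exact h t g f hg hf

lemma submatrix {F : Type*} [CommRing F] {k m k' m' : ℕ} {A : Matrix (Fin k) (Fin m) F}
    (h : Superregular A) {f : Fin k' → Fin k} {g : Fin m' → Fin m}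
    (hf : Function.Injective f) (hg : Function.Injective g) :
    Superregular (A.submatrix f g) := by
  intro t f' g' hf' hg'
  rw [Matrix.submatrix_submatrix]
  exact h t _ _ (hf.comp hf') (hg.comp hg')

lemma map {F K : Type*} [CommRing F] [CommRing K] {k m : ℕ} {A : Matrix (Fin k) (Fin m) F}
    (h : Superregular A) (e : F ≃+* K) : Superregular (A.map e) := by
  intro t f g hf hg h0
  apply h t f g hf hg
  apply e.injective
  rw [map_zero, ← h0]
  exact RingEquiv.map_det e _

lemma scale {F : Type*} [Field F] {k m : ℕ} {A : Matrix (Fin k) (Fin m) F}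
    (h : Superregular A) {u : Fin k → F} {v : Fin m → F} (hu : ∀ i, u i ≠ 0)
    (hv : ∀ j, v j ≠ 0) : Superregular (Matrix.of fun i j => u i * (v j * A i j)) := by
  intro t f g hf hg
  have h1 := Matrix.det_mul_column (fun s => u (f s))
    (Matrix.of fun i j => v (g j) * A (f i) (g j))
  have h2 := Matrix.det_mul_row (fun s => v (g s)) (A.submatrix f g)
  have h3 : (Matrix.of fun i j => u i * (v j * A i j)).submatrix f g =
      Matrix.of fun i j => u (f i) * (Matrix.of fun i j => v (g j) * A (f i) (g j)) i j := rfl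
  rw [h3, h1]
  refine mul_ne_zero (Finset.prod_ne_zero_iff.2 fun s _ => hu _) ?_
  exact h2.trans_ne
    (mul_ne_zero (Finset.prod_ne_zero_iff.2 fun s _ => hv _) (h t f g hf hg))

lemma ne_zero {F : Type*} [CommRing F] {k m : ℕ} {A : Matrix (Fin k) (Fin m) F}
    (h : Superregular A) (i : Fin k) (j : Fin m) : A i j ≠ 0 := by
  have := h 1 ![i] ![j] (Function.injective_of_subsingleton _)
    (Function.injective_of_subsingleton _)
  rwa [Matrix.det_fin_one] at this

lemma minor_two {F : Type*} [CommRing F] {k m : ℕ} {A : Matrix (Fin k) (Fin m) F}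
    (h : Superregular A) {i i' : Fin k} {j j' : Fin m} (hi : i ≠ i') (hj : j ≠ j') :
    A i j * A i' j' - A i j' * A i' j ≠ 0 := by
  have := h 2 ![i, i'] ![j, j'] (by simpa [Function.Injective, Fin.forall_fin_two, eq_comm] using hi)
    (by simpa [Function.Injective, Fin.forall_fin_two, eq_comm] using hj)
  rwa [Matrix.det_fin_two] at this

lemma le_four {F : Type*} [Field F] [Fintype F] (hF : Fintype.card F = 5) {k m : ℕ}
    {A : Matrix (Fin k) (Fin m) F} (h : Superregular A) (hk : 2 ≤ k) : m ≤ 4 := by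
  classical
  let i₀ : Fin k := ⟨0, by omega⟩
  let i₁ : Fin k := ⟨1, by omega⟩
  have hi : i₀ ≠ i₁ := by simp [i₀, i₁]
  let φ : Fin m → Fˣ := fun j =>
    Units.mk0 (A i₀ j / A i₁ j) (div_ne_zero (h.ne_zero _ _) (h.ne_zero _ _))
  have hφ : Function.Injective φ := by
    intro j j' hjj
    by_contra hne
    have h1 : A i₀ j / A i₁ j = A i₀ j' / A i₁ j' := congrArg Units.val hjj
    rw [div_eq_div_iff (h.ne_zero _ _) (h.ne_zero _ _)] at h1
    exact h.minor_two hi hne (sub_eq_zero.2 h1)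
  have := Fintype.card_le_of_injective φ hφ
  rw [Fintype.card_units, hF, Fintype.card_fin] at this
  exact this

set_option synthInstance.maxHeartbeats 400000 in
set_option synthInstance.maxSize 1000 in
set_option maxRecDepth 4000 in
/-- The normalized form of a `3 × 4` superregular matrix over `F_5`, with rows `(1, 1, 1, 1)`,
`(1, a, b, c)` and `(1, a', b', c')`, does not exist. -/
lemma normalized_impossible : ∀ a : ZMod 5, a ≠ 0 → a ≠ 1 → ∀ b : ZMod 5, b ≠ 0 → b ≠ 1 →
    a ≠ b → ∀ c : ZMod 5, c ≠ 0 → c ≠ 1 → a ≠ c → b ≠ c →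
    ∀ a' : ZMod 5, a' ≠ 0 → a' ≠ 1 → a ≠ a' → ∀ b' : ZMod 5, b' ≠ 0 → b' ≠ 1 → b ≠ b' →
    a' ≠ b' → (a - 1) * (b' - 1) - (b - 1) * (a' - 1) ≠ 0 →
    ∀ c' : ZMod 5, c' ≠ 0 → c' ≠ 1 → c ≠ c' → a' ≠ c' → b' ≠ c' →
    (a - 1) * (c' - 1) - (c - 1) * (a' - 1) ≠ 0 →
    (b - 1) * (c' - 1) - (c - 1) * (b' - 1) = 0 := by
  decide

lemma not_three_by_four {F : Type*} [Field F] [Fintype F] (hF : Fintype.card F = 5)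
    {A : Matrix (Fin 3) (Fin 4) F} (h : Superregular A) : False := by
  classical
  have : Fact (Nat.Prime 5) := ⟨by norm_num⟩
  let e : F ≃+* ZMod 5 := (ZMod.ringEquivOfPrime F (by norm_num) hF).symm
  have hB := (h.scale (u := fun i => A 0 0 * (A i 0)⁻¹) (v := fun j => (A 0 j)⁻¹)
    (fun i => mul_ne_zero (h.ne_zero _ _) (inv_ne_zero (h.ne_zero _ _)))
    (fun j => inv_ne_zero (h.ne_zero _ _))).map e
  obtain ⟨B, hBdef⟩ : ∃ B, B = (Matrix.of fun i j =>
    A 0 0 * (A i 0)⁻¹ * ((A 0 j)⁻¹ * A i j)).map e := ⟨_, rfl⟩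
  rw [← hBdef] at hB
  have hrow : ∀ j, B 0 j = 1 := by
    intro j
    have h0 := h.ne_zero 0 0
    have h1 := h.ne_zero 0 j
    have : A 0 0 * (A 0 0)⁻¹ * ((A 0 j)⁻¹ * A 0 j) = 1 := by field_simp
    rw [hBdef, Matrix.map_apply, Matrix.of_apply, this, map_one]
  have hcol : ∀ i, B i 0 = 1 := by
    intro i
    have h0 := h.ne_zero 0 0
    have h1 := h.ne_zero i 0
    have : A 0 0 * (A i 0)⁻¹ * ((A 0 0)⁻¹ * A i 0) = 1 := by field_simp
    rw [hBdef, Matrix.map_apply, Matrix.of_apply, this, map_one]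
  have ne_one : ∀ i j, i ≠ 0 → j ≠ 0 → B i j ≠ 1 := by
    intro i j hi hj h1
    apply hB.minor_two hi.symm hj.symm
    rw [hrow, hrow, hcol, h1]
    ring
  have row_inj : ∀ i j j', i ≠ 0 → j ≠ j' → B i j ≠ B i j' := by
    intro i j j' hi hj h1
    apply hB.minor_two hi.symm hj
    rw [hrow, hrow, h1]
    ring
  have col_inj : ∀ i i' j, j ≠ 0 → i ≠ i' → B i j ≠ B i' j := by
    intro i i' j hj hi h1
    apply hB.minor_two hi hj.symm
    rw [hcol, hcol, h1]
    ring
  have minor : ∀ j j', j ≠ 0 → j' ≠ 0 → j ≠ j' →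
      (B 1 j - 1) * (B 2 j' - 1) - (B 1 j' - 1) * (B 2 j - 1) ≠ 0 := by
    intro j j' hj hj' hjj h1
    have hg : Function.Injective ![0, j, j'] := by
      simp [Function.Injective, Fin.forall_fin_succ, hj, hj', hjj, hj.symm, hj'.symm, hjj.symm]
    apply hB 3 id ![0, j, j'] Function.injective_id hg
    rw [Matrix.det_fin_three]
    simp only [Matrix.submatrix_apply, id, Matrix.cons_val, hrow, hcol]
    linear_combination h1
  have z := hB.ne_zero
  exact minor 2 3 (by decide) (by decide) (by decide)
    (normalized_impossible (B 1 1) (z _ _) (ne_one _ _ (by decide) (by decide))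
      (B 1 2) (z _ _) (ne_one _ _ (by decide) (by decide))
      (row_inj _ _ _ (by decide) (by decide))
      (B 1 3) (z _ _) (ne_one _ _ (by decide) (by decide))
      (row_inj _ _ _ (by decide) (by decide)) (row_inj _ _ _ (by decide) (by decide))
      (B 2 1) (z _ _) (ne_one _ _ (by decide) (by decide))
      (col_inj _ _ _ (by decide) (by decide))
      (B 2 2) (z _ _) (ne_one _ _ (by decide) (by decide))
      (col_inj _ _ _ (by decide) (by decide)) (row_inj _ _ _ (by decide) (by decide))
      (minor 1 2 (by decide) (by decide) (by decide))
      (B 2 3) (z _ _) (ne_one _ _ (by decide) (by decide))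
      (col_inj _ _ _ (by decide) (by decide)) (row_inj _ _ _ (by decide) (by decide))
      (row_inj _ _ _ (by decide) (by decide))
      (minor 1 3 (by decide) (by decide) (by decide)))

lemma not_three_le_four_le {F : Type*} [Field F] [Fintype F] (hF : Fintype.card F = 5) {k m : ℕ}
    {A : Matrix (Fin k) (Fin m) F} (h : Superregular A) (hk : 3 ≤ k) (hm : 4 ≤ m) : False :=
  (h.submatrix (Fin.castLE_injective hk) (Fin.castLE_injective hm)).not_three_by_four hF

end Superregular

/-- The redundancy part of a systematic generator matrix of an MDS code is superregular. -/
lemma exists_superregular {F : Type*} [Field F] [DecidableEq F] {k m : ℕ}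
    (C : Submodule F (Fin (k + m) → F)) (hk : Module.finrank F C = k)
    (hd : ∀ c ∈ C, c ≠ 0 → m + 1 ≤ hammingNorm c) :
    ∃ A : Matrix (Fin k) (Fin m) F, Superregular A := by
  classical
  let π : C →ₗ[F] (Fin k → F) := (LinearMap.funLeft F F (Fin.castAdd m)).comp C.subtype
  have hπ : ∀ c i, π c i = c.1 (Fin.castAdd m i) := fun _ _ => rfl
  have hinj : Function.Injective π := by
    rw [← LinearMap.ker_eq_bot, LinearMap.ker_eq_bot']
    intro c hc
    by_contra hne
    have h1 := hd c.1 c.2 (by simpa using hne)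
    have h2 : (Finset.univ.filter fun i => c.1 i ≠ 0) ⊆
        Finset.univ.image (Fin.natAdd k : Fin m → Fin (k + m)) := by
      intro i
      refine Fin.addCases (fun i hi => ?_) (fun j _ => by simp) i
      exact absurd (congrFun hc i) (by simpa [hπ] using hi)
    have h3 := (Finset.card_le_card h2).trans Finset.card_image_le
    rw [Finset.card_univ, Fintype.card_fin] at h3
    exact absurd (h1.trans h3) (by omega)
  have hsurj : Function.Surjective π :=
    (LinearMap.injective_iff_surjective_of_finrank_eq_finrank (by simpa using hk)).1 hinj
  choose r hr using fun i : Fin k => hsurj (Pi.single i 1)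
  refine ⟨Matrix.of fun i j => (r i).1 (Fin.natAdd k j), fun t f g hf hg hdet => ?_⟩
  obtain ⟨v, hv0, hv⟩ := Matrix.exists_vecMul_eq_zero_iff.2 hdet
  let c : C := ∑ s, v s • r (f s)
  have hπc : π c = ∑ s, v s • Pi.single (f s) 1 := by simp [c, hr]
  have hcf : ∀ s, π c (f s) = v s := by
    intro s
    simp [hπc, Finset.sum_apply, Pi.single_apply, hf.eq_iff]
  have hcf' : ∀ i, i ∉ Finset.univ.image f → π c i = 0 := by
    intro i hi
    rw [hπc, Finset.sum_apply]
    refine Finset.sum_eq_zero fun s _ => ?_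
    have : i ≠ f s := fun h => hi (by simp [h])
    simp [this]
  have hcg : ∀ s, c.1 (Fin.natAdd k (g s)) = 0 := by
    intro s
    have := congrFun hv s
    simpa [c, Matrix.vecMul, dotProduct] using this
  have hc0 : c.1 ≠ 0 := by
    intro h
    apply hv0
    funext s
    rw [← hcf s, hπ, h]
    rfl
  have h1 := hd c.1 c.2 hc0
  -- The support of `c` lies in the `t` selected information positions and the `m - t` check
  -- positions that are not selected.
  have h2 : (Finset.univ.filter fun i => c.1 i ≠ 0) ⊆
      (Finset.univ.image f).image (Fin.castAdd m) ∪
        (Finset.univ.image g)ᶜ.image (Fin.natAdd k) := by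
    intro i
    refine Fin.addCases (fun i hi => ?_) (fun j hj => ?_) i
    · refine Finset.mem_union_left _ (Finset.mem_image_of_mem _ ?_)
      by_contra hni
      exact (Finset.mem_filter.1 hi).2 (hcf' i hni)
    · refine Finset.mem_union_right _ (Finset.mem_image_of_mem _ ?_)
      rw [Finset.mem_compl]
      intro hmem
      obtain ⟨s, -, rfl⟩ := Finset.mem_image.1 hmem
      exact (Finset.mem_filter.1 hj).2 (hcg s)
  have h3 := (Finset.card_le_card h2).trans (Finset.card_union_le _ _)
  have h4 : ((Finset.univ.image f).image (Fin.castAdd m)).card ≤ t :=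
    (Finset.card_image_le.trans Finset.card_image_le).trans (by simp)
  have h5 : ((Finset.univ.image g)ᶜ.image (Fin.natAdd k)).card ≤ m - t := by
    refine Finset.card_image_le.trans ?_
    rw [Finset.card_compl, Finset.card_image_of_injective _ hg]
    simp
  have h6 : t ≤ m := by simpa using Fintype.card_le_of_injective g hg
  have h7 : hammingNorm c.1 ≤ t + (m - t) := h3.trans (add_le_add h4 h5)
  omega

/-- The possible parameters of a nontrivial MDS code over `F_5`. -/
theorem stmt_18 {F : Type*} [Field F] [Fintype F] [DecidableEq F]
    (hF : Fintype.card F = 5) {n k d : ℕ} (C : Submodule F (Fin n → F))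
    (hC : IsLinearCode C k d) (hMDS : d + k = n + 1)
    (hk2 : 2 ≤ k) (hkn : k ≤ n - 2) :
    (n, k) ∈ ({(6,4), (6,3), (6,2), (5,3), (5,2), (4,2)} : Set (ℕ × ℕ)) := by
  obtain ⟨m, rfl⟩ : ∃ m, n = k + m := ⟨n - k, by omega⟩
  obtain ⟨hdim, -, hmin⟩ := hC
  obtain ⟨A, hA⟩ := exists_superregular C hdim fun c hc hc0 => by
    have := hmin ⟨c, hc, hc0, rfl⟩
    omega
  have hm4 : m ≤ 4 := hA.le_four hF hk2
  have hk4 : k ≤ 4 := hA.transpose.le_four hF (by omega)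
  have h34 := hA.not_three_le_four_le hF
  have h43 := hA.transpose.not_three_le_four_le hF
  have hm2 : 2 ≤ m := by omega
  simp only [Set.mem_insert_iff, Set.mem_singleton_iff, Prod.mk.injEq]
  by_cases h1 : 3 ≤ k
  · have : ¬ 4 ≤ m := h34 h1
    by_cases h2 : 3 ≤ m
    · have : ¬ 4 ≤ k := h43 h2
      omega
    · omega
  · omega
end

section
/- Let q be a prime power. Then every linear [q+1, q−1, 3]_q code is completely regular. -/
/-!
The code is perfect: balls of radius one around codewords are disjoint because the minimum distance
is `3`, and they fill the space because `q ^ (q - 1) * (1 + (q + 1) * (q - 1)) = q ^ (q + 1)`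
(`bijective_add_err`).

Fix `v` and `t`, and count the vectors `y` at distance `t` from `v` according to the unique codeword
`c` within distance one of `y`. The number of `y` belonging to `c` depends only on `s = d(v, c)`
(`card_err`); call it `ballCount s t`. It vanishes for `s > t + 1` and equals `t + 1` for
`s = t + 1`. The total does not depend on `v`, so
`∑ s ≤ t + 1, B_{v,s} * ballCount s t` is independent of `v` (`sum_numAt_mul`). This recursion
expresses `B_{v,t+1}` through `B_{v,0}, …, B_{v,t}`, so all the numbers `B_{v,t}` are determined by
`B_{v,0}`, that is, by whether `v` is a codeword, which `d(v, C)` decides.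
-/

open Finset

section Perfect

variable {F : Type*} [Field F] {n : ℕ}

/-- The error vectors of Hamming weight at most one: `none` gives the zero vector and `some (i, a)`
the vector with the single nonzero entry `a` in position `i`. -/
def err : Option (Fin n × Fˣ) → Fin n → F
  | none => 0
  | some p => Pi.single p.1 (p.2 : F)

lemma err_injective : Function.Injective (err : Option (Fin n × Fˣ) → Fin n → F) := by
  rintro (_ | ⟨i, a⟩) (_ | ⟨j, b⟩) h
  · rfl
  · have := congrFun h j
    simp [err] at this
    exact absurd this.symm b.ne_zero
  · have := congrFun h i
    simp [err] at this
  · have h1 := congrFun h i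
    by_cases hij : i = j
    · subst hij
      simp [err] at h1
      rw [Units.ext h1]
    · simp [err, hij] at h1

variable [DecidableEq F]

lemma hammingDist_eq_sub (v c : Fin n → F) : hammingDist v c = hammingNorm (v - c) := by
  rw [hammingDist_comm, hammingDist_eq_hammingNorm, neg_add_eq_sub]

lemma hammingNorm_err_le (o : Option (Fin n × Fˣ)) : hammingNorm (err o : Fin n → F) ≤ 1 := by
  rcases o with _ | ⟨i, a⟩
  · simp [err]
  · unfold hammingNorm
    refine (Finset.card_le_card (t := {i}) ?_).trans (by simp)
    intro j hj
    by_contra hne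
    simp [err, Pi.single_apply] at hj hne
    exact hne hj

/-- Every vector is uniquely a codeword plus an error of weight at most one. -/
lemma bijective_add_err [Fintype F] (C : Submodule F (Fin (Fintype.card F + 1) → F))
    (hC : IsLinearCode C (Fintype.card F - 1) 3) :
    Function.Bijective
      (fun p : C × Option (Fin (Fintype.card F + 1) × Fˣ) =>
        (p.1 : Fin (Fintype.card F + 1) → F) + err p.2) := by
  classical
  rw [Fintype.bijective_iff_injective_and_card]
  constructor
  · rintro ⟨c, o⟩ ⟨c', o'⟩ h
    simp only at h
    have hcc : c = c' := by
      by_contra hne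
      have h3 : 3 ≤ hammingNorm ((c : Fin (Fintype.card F + 1) → F) - (c' : _ → F)) :=
        hC.2.2 ⟨_, C.sub_mem c.2 c'.2, fun h0 => hne (Subtype.ext (sub_eq_zero.1 h0)), rfl⟩
      have he : (c : Fin (Fintype.card F + 1) → F) - (c' : _ → F) = err o' - err o := by
        rw [sub_eq_sub_iff_add_eq_add, h]; abel
      have h1 := hammingDist_triangle (err o') 0 (err o : Fin (Fintype.card F + 1) → F)
      rw [hammingDist_zero_right, hammingDist_zero_left, hammingDist_eq_sub] at h1
      have h2 := hammingNorm_err_le o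
      have h4 := hammingNorm_err_le o'
      rw [he] at h3
      omega
    subst hcc
    rw [err_injective (add_left_cancel h)]
  · have hq : 1 < Fintype.card F := Fintype.one_lt_card
    rw [Fintype.card_prod, Module.card_eq_pow_finrank (K := F) (V := C), hC.1]
    simp only [Fintype.card_option, Fintype.card_prod, Fintype.card_fin, Fintype.card_units,
      Fintype.card_fun]
    obtain ⟨m, hm⟩ := Nat.exists_eq_add_of_lt hq
    rw [hm]
    simp only [Nat.add_sub_cancel]
    ring

/-- Changing one coordinate of `w` by `a` alters the weight only through that coordinate; the
indicators stand on both sides to avoid natural-number subtraction. -/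
lemma hammingNorm_sub_err (w : Fin n → F) (i : Fin n) (a : Fˣ) :
    hammingNorm (w - err (some (i, a))) + (if w i = 0 then 0 else 1) =
      hammingNorm w + (if w i = (a : F) then 0 else 1) := by
  have key : ∀ x : Fin n → F, hammingNorm x =
      (if x i = 0 then 0 else 1) + ∑ j ∈ univ.erase i, (if x j = 0 then 0 else 1) := by
    intro x
    rw [Finset.add_sum_erase _ (fun j => if x j = 0 then 0 else 1) (mem_univ i)]
    unfold hammingNorm
    rw [Finset.card_filter]
    exact Finset.sum_congr rfl fun j _ => by by_cases h : x j = 0 <;> simp [h]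
  rw [key w, key (w - err (some (i, a)))]
  have h2 : ∑ j ∈ univ.erase i, (if (w - err (some (i, a))) j = 0 then 0 else 1) =
      ∑ j ∈ univ.erase i, (if w j = 0 then 0 else 1) := by
    refine Finset.sum_congr rfl fun j hj => ?_
    simp [err, Finset.ne_of_mem_erase hj]
  rw [h2]
  simp only [err, Pi.sub_apply, Pi.single_eq_same, sub_eq_zero]
  omega

/-- The number of vectors `y` with `d(v, y) = t` in the ball of radius one around a vector at
distance `s ≤ n` from `v`, over an alphabet with `q ≥ 2` letters and in length `n`. The centre has
distance `s`; changing a coordinate where it agrees with `v` gives `s + 1`; changing one where it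
differs gives `s - 1` for one choice of letter and `s` for the other `q - 2`. -/
def ballCount (q n s t : ℕ) : ℕ :=
  (if s = t then 1 else 0) +
    ((n - s) * ((q - 1) * (if s + 1 = t then 1 else 0)) +
      s * ((if s = t + 1 then 1 else 0) + (q - 2) * (if s = t then 1 else 0)))

/-- With `w = v - c`, the vectors `w - err o` are the differences `v - y` for `y` in the ball of
radius one around `c`. -/
lemma card_err [Fintype F] (w : Fin n → F) (t : ℕ) :
    ∑ o : Option (Fin n × Fˣ), (if hammingNorm (w - err o) = t then 1 else 0) =
      ballCount (Fintype.card F) n (hammingNorm w) t := by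
  have inner : ∀ i : Fin n,
      ∑ a : Fˣ, (if hammingNorm (w - err (some (i, a))) = t then 1 else 0) =
      if w i = 0 then (Fintype.card F - 1) * (if hammingNorm w + 1 = t then 1 else 0)
      else (if hammingNorm w = t + 1 then 1 else 0) +
        (Fintype.card F - 2) * (if hammingNorm w = t then 1 else 0) := by
    intro i
    by_cases hi : w i = 0
    · have : ∀ a : Fˣ, hammingNorm (w - err (some (i, a))) = hammingNorm w + 1 := by
        intro a
        simpa [hi, a.ne_zero.symm] using hammingNorm_sub_err w i a
      simp only [this, hi, if_true, Finset.sum_const, Finset.card_univ, Fintype.card_units,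
        smul_eq_mul]
    · have h0 : hammingNorm (w - err (some (i, Units.mk0 (w i) hi))) + 1 = hammingNorm w := by
        simpa [hi] using hammingNorm_sub_err w i (Units.mk0 (w i) hi)
      have h1 : ∀ a ∈ univ.erase (Units.mk0 (w i) hi),
          (if hammingNorm (w - err (some (i, a))) = t then 1 else 0) =
            if hammingNorm w = t then 1 else 0 := by
        intro a ha
        have hne : w i ≠ a := fun h => Finset.ne_of_mem_erase ha (Units.ext h.symm)
        have : hammingNorm (w - err (some (i, a))) = hammingNorm w := by
          simpa [hi, hne] using hammingNorm_sub_err w i a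
        rw [this]
      rw [← Finset.add_sum_erase _ _ (mem_univ (Units.mk0 (w i) hi)), Finset.sum_congr rfl h1,
        Finset.sum_const, Finset.card_erase_of_mem (mem_univ _), Finset.card_univ,
        Fintype.card_units, smul_eq_mul, if_neg hi, ← h0, Nat.sub_sub]
      simp only [Nat.add_right_cancel_iff]
  rw [Fintype.sum_option, Fintype.sum_prod_type]
  rw [show w - err none = w from sub_zero w]
  simp only [inner]
  rw [ballCount, Finset.sum_ite, Finset.sum_const, Finset.sum_const, smul_eq_mul, smul_eq_mul]
  have h1 : #{x | ¬ w x = 0} = hammingNorm w := rfl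
  have h2 : #{x | w x = 0} = n - hammingNorm w := by
    have := Finset.card_filter_add_card_filter_not (s := (univ : Finset (Fin n)))
      (fun x => w x = 0)
    rw [h1, Finset.card_univ, Fintype.card_fin] at this
    omega
  rw [h1, h2]

lemma numAt_eq_sum (C : Submodule F (Fin n → F)) [Fintype C] (v : Fin n → F) (t : ℕ) :
    numAt (C : Set (Fin n → F)) v t =
      ∑ c : C, if hammingNorm (v - (c : Fin n → F)) = t then 1 else 0 := by
  rw [← Finset.card_filter, numAt, ← Set.ncard_coe_finset,
    ← Set.ncard_image_of_injective _ Subtype.val_injective]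
  congr 1
  ext x
  simp [hammingDist_eq_sub, and_comm]

/-- Counting the vectors at distance `t` from `v` by the codeword nearest to them. -/
lemma sum_numAt_mul [Fintype F] (C : Submodule F (Fin (Fintype.card F + 1) → F))
    (hC : IsLinearCode C (Fintype.card F - 1) 3) (v : Fin (Fintype.card F + 1) → F) (t : ℕ) :
    ∑ s ∈ range (t + 2), numAt (C : Set (Fin (Fintype.card F + 1) → F)) v s *
        ballCount (Fintype.card F) (Fintype.card F + 1) s t =
      ∑ y : Fin (Fintype.card F + 1) → F, if hammingNorm y = t then 1 else 0 := by
  classical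
  rw [← (Equiv.subLeft v).sum_comp (fun y => if hammingNorm y = t then 1 else 0),
    ← (Equiv.ofBijective _ (bijective_add_err C hC)).sum_comp, Fintype.sum_prod_type]
  simp only [Equiv.ofBijective_apply, Equiv.subLeft_apply, ← sub_sub, card_err,
    numAt_eq_sum, Finset.sum_mul]
  rw [Finset.sum_comm]
  refine Finset.sum_congr rfl fun c _ => ?_
  simp only [ite_mul, one_mul, zero_mul]
  rw [Finset.sum_ite_eq]
  split_ifs with h
  · rfl
  · rw [mem_range, not_lt] at h
    have h1 : hammingNorm (v - (c : Fin (Fintype.card F + 1) → F)) ≠ t := by omega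
    have h2 : hammingNorm (v - (c : Fin (Fintype.card F + 1) → F)) + 1 ≠ t := by omega
    have h3 : hammingNorm (v - (c : Fin (Fintype.card F + 1) → F)) ≠ t + 1 := by omega
    simp [ballCount, h1, h2, h3]

lemma distTo_eq_zero_iff (C : Submodule F (Fin n → F)) (v : Fin n → F) :
    distTo (C : Set (Fin n → F)) v = 0 ↔ v ∈ C := by
  rw [distTo, Nat.sInf_eq_zero, or_iff_left]
  · simp
  · exact (Set.Nonempty.image _ ⟨0, C.zero_mem⟩).ne_empty

open Classical in
lemma numAt_zero (C : Submodule F (Fin n → F)) (v : Fin n → F) :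
    numAt (C : Set (Fin n → F)) v 0 = if v ∈ C then 1 else 0 := by
  unfold numAt
  split_ifs with h
  · rw [Set.ncard_eq_one]
    refine ⟨v, Set.ext fun x => ?_⟩
    simp only [hammingDist_eq_zero, Set.mem_ofPred_eq, Set.mem_singleton_iff, SetLike.mem_coe]
    exact ⟨fun hx => hx.2.symm, by rintro rfl; exact ⟨h, rfl⟩⟩
  · rw [show {c ∈ (C : Set (Fin n → F)) | hammingDist v c = 0} = ∅ from
      Set.eq_empty_of_forall_notMem fun x hx => h (hammingDist_eq_zero.1 hx.2 ▸ hx.1)]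
    simp

end Perfect

/-- For any prime power `q`, every linear `[q+1, q-1, 3]_q` code (a Hamming
code) is completely regular. -/
theorem stmt_19 {F : Type*} [Field F] [Fintype F] [DecidableEq F] (q : ℕ)
    (hq : Fintype.card F = q)
    (C : Submodule F (Fin (q + 1) → F)) (hC : IsLinearCode C (q - 1) 3) :
    CompletelyRegular (C : Set (Fin (q + 1) → F)) := by
  classical
  subst hq
  intro u v huv t
  induction t using Nat.strong_induction_on with
  | _ t ih =>
    rcases t with _ | t
    · have : u ∈ C ↔ v ∈ C := by
        rw [← distTo_eq_zero_iff, ← distTo_eq_zero_iff, huv]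
      simp only [numAt_zero, this]
    · have h := (sum_numAt_mul C hC u t).trans (sum_numAt_mul C hC v t).symm
      rw [Finset.sum_range_succ _ (t + 1), Finset.sum_range_succ _ (t + 1),
        Finset.sum_congr rfl fun s hs => congrArg (· * _) (ih s (mem_range.1 hs))] at h
      refine Nat.eq_of_mul_eq_mul_right ?_ (Nat.add_left_cancel h)
      simp [ballCount]
end
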